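/- Let N ≥ 1, let Ω ⊂ ℝ^N be a bounded open set with smooth boundary, let 1 < p ≤ θ, Λ > 0 and σ > 0, and let s > p + 1 satisfy L(s) < 0. Then there exists a finite constant C_s such that for every λ ∈ (Λ/2, Λ), with γ = σλ, and every pair (u, v) of functions in C²(Ω) ∩ C(closure Ω), positive in Ω and vanishing on ∂Ω, satisfying −Δu = λ(v+1)^p and −Δv = γ(u+1)^θ in Ω and stable, one has ∫_Ω (u+1)^{(θ−1)/2} (v+1)^{(p+2s−1)/2} dx + ∫_Ω (u+1)^{θ + (θ+1)(s−1)/(p+1)} dx ≤ C_s. -/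

import Mathlib

open MeasureTheory Metric Real Set

noncomputable section

/-- The Euclidean Laplacian `Δw(x) = ∑ i, ∂²w/∂xᵢ²(x)` on `ℝ^N`. -/
def lap {N : ℕ} (w : EuclideanSpace ℝ (Fin N) → ℝ) (x : EuclideanSpace ℝ (Fin N)) : ℝ :=
  ∑ i : Fin N,
    fderiv ℝ (fun y => fderiv ℝ w y (EuclideanSpace.single i 1)) x (EuclideanSpace.single i 1)

/-- `φ` is a smooth compactly supported test function with support inside `Ω`. -/
def IsTestFun {N : ℕ} (Ω : Set (EuclideanSpace ℝ (Fin N)))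
    (φ : EuclideanSpace ℝ (Fin N) → ℝ) : Prop :=
  ContDiff ℝ (⊤ : ℕ∞) φ ∧ HasCompactSupport φ ∧ tsupport φ ⊆ Ω

/-- Stability of a classical solution of `-Δu = λ(v+1)^p, -Δv = γ(u+1)^θ` in `Ω`:
`√(λγpθ) ∫_Ω (v+1)^((p-1)/2) (u+1)^((θ-1)/2) φ² ≤ ∫_Ω |∇φ|²` for all test functions. -/
def IsStable {N : ℕ} (Ω : Set (EuclideanSpace ℝ (Fin N))) (lam gam p θ : ℝ)
    (u v : EuclideanSpace ℝ (Fin N) → ℝ) : Prop :=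
  ∀ φ : EuclideanSpace ℝ (Fin N) → ℝ, IsTestFun Ω φ →
    Real.sqrt (lam * gam * p * θ) *
        ∫ x in Ω, (v x + 1) ^ ((p - 1) / 2) * (u x + 1) ^ ((θ - 1) / 2) * φ x ^ 2
      ≤ ∫ x in Ω, ‖gradient φ x‖ ^ 2

/-- `Ω` has smooth boundary: near each boundary point, `Ω` is the sublevel set of a
smooth defining function with nonvanishing differential. -/
def HasSmoothBoundary {N : ℕ} (Ω : Set (EuclideanSpace ℝ (Fin N))) : Prop :=
  ∀ x ∈ frontier Ω, ∃ (U : Set (EuclideanSpace ℝ (Fin N)))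
    (f : EuclideanSpace ℝ (Fin N) → ℝ), IsOpen U ∧ x ∈ U ∧ ContDiff ℝ (⊤ : ℕ∞) f ∧
    (∀ y ∈ U, fderiv ℝ f y ≠ 0) ∧ (∀ y ∈ U, y ∈ Ω ↔ f y < 0)

/-- The quartic polynomial `L`. -/
def Lpoly (p θ s : ℝ) : ℝ :=
  s ^ 4 - (16 * p * θ * (p + 1) / (θ + 1)) * s ^ 2
    + (16 * p * θ * (p + 1) * (p + θ + 2) / (θ + 1) ^ 2) * s
    - 16 * p * θ * (p + 1) ^ 2 / (θ + 1) ^ 2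

/-- The quartic polynomial `H`. -/
def Hpoly (p θ x : ℝ) : ℝ :=
  x ^ 4 - (16 * p * θ * (p + 1) * (θ + 1) / (p * θ - 1) ^ 2) * x ^ 2
    + (16 * p * θ * (p + 1) * (θ + 1) * (p + θ + 2) / (p * θ - 1) ^ 3) * x
    - 16 * p * θ * (p + 1) ^ 2 * (θ + 1) ^ 2 / (p * θ - 1) ^ 4

open Filter Topology Laplacian Convolution

/-!
Write `U = u + 1`, `V = v + 1`, `W = V ^ ((p - 1) / 2) U ^ ((θ - 1) / 2)`, `α = (θ + 1) / (p + 1)`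
and `r = α s`. Testing stability with `(v - 1)₊ ^ (s / 2)` and `(u - 1)₊ ^ (r / 2)` and integrating
by parts in the equations bounds `√(λγpθ) ∫ W (v - 1)₊ ^ s` and `√(λγpθ) ∫ W (u - 1)₊ ^ r` by
multiples of `γ ∫ V ^ (s - 1) U ^ θ` and `λ ∫ U ^ (r - 1) V ^ p`; truncating at `1` makes the test
functions `C¹` with compact support. For a suitable weight `ω`, AM-GM dominates the weighted sum of
the right-hand sides by a multiple of `∫ W (V ^ s + ω U ^ r)`, and `L(s) < 0` says exactly that
this multiple is smaller than `√(λγpθ)`, so it is absorbed up to lower-order terms. The integral of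
a pure power of `U` is then controlled through `U ^ α ≤ T V`, a consequence of the maximum
principle.
-/

theorem deriv_deriv_nonpos_of_isLocalMax {f : ℝ → ℝ} {a : ℝ} (hf : ContinuousAt f a)
    (hmax : IsLocalMax f a) : deriv (deriv f) a ≤ 0 := by
  by_contra! hpos
  have hmin : IsLocalMin f a := isLocalMin_of_deriv_deriv_pos hpos hmax.deriv_eq_zero hf
  have hconst : f =ᶠ[𝓝 a] fun _ => f a := by
    filter_upwards [hmin, hmax] with t h₁ h₂ using le_antisymm h₂ h₁
  have hzero : deriv (deriv f) a = 0 := by simpa using hconst.deriv.deriv_eq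
  exact hpos.ne' hzero

theorem fderiv_fderiv_apply_nonpos_of_isLocalMax {E : Type*} [NormedAddCommGroup E]
    [NormedSpace ℝ E] {f : E → ℝ} {a : E} (hf : ContDiffAt ℝ 2 f a) (hmax : IsLocalMax f a)
    (e : E) : fderiv ℝ (fun y => fderiv ℝ f y e) a e ≤ 0 := by
  let line : ℝ → E := fun t => a + t • e
  have hline (t : ℝ) : HasDerivAt line e t := by
    simpa [line] using ((hasDerivAt_id t).smul_const e).const_add a
  have hline_zero : line 0 = a := by simp [line]
  have htendsto : Tendsto line (𝓝 0) (𝓝 a) := hline_zero ▸ (hline 0).continuousAt.tendsto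
  have hdiff : ∀ᶠ y in 𝓝 a, DifferentiableAt ℝ f y :=
    (hf.eventually (by simp)).mono fun y hy => hy.differentiableAt two_ne_zero
  have hdiff₂ : DifferentiableAt ℝ (fun y => fderiv ℝ f y e) (line 0) := by
    rw [hline_zero]
    exact ((hf.fderiv_right (m := 1) le_rfl).differentiableAt one_ne_zero).clm_apply
      (differentiableAt_const e)
  have hderiv : deriv (f ∘ line) =ᶠ[𝓝 0] fun t => fderiv ℝ f (line t) e := by
    filter_upwards [htendsto.eventually hdiff] with t ht
    exact (ht.hasFDerivAt.comp_hasDerivAt t (hline t)).deriv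
  have hderiv₂ : deriv (deriv (f ∘ line)) 0 = fderiv ℝ (fun y => fderiv ℝ f y e) a e := by
    rw [hderiv.deriv_eq, ← hline_zero]
    exact (hdiff₂.hasFDerivAt.comp_hasDerivAt 0 (hline 0)).deriv
  have hcont : ContinuousAt (f ∘ line) 0 :=
    ContinuousAt.comp (by rw [hline_zero]; exact hf.continuousAt) (hline 0).continuousAt
  have hmax_line : IsLocalMax (f ∘ line) 0 := by
    filter_upwards [htendsto.eventually hmax] with t ht
    simpa only [Function.comp_apply, hline_zero] using ht
  exact hderiv₂ ▸ deriv_deriv_nonpos_of_isLocalMax hcont hmax_line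

theorem lap_nonpos_of_isLocalMax {N : ℕ} {w : EuclideanSpace ℝ (Fin N) → ℝ}
    {a : EuclideanSpace ℝ (Fin N)} (hw : ContDiffAt ℝ 2 w a) (hmax : IsLocalMax w a) :
    lap w a ≤ 0 :=
  Finset.sum_nonpos fun _ _ => fderiv_fderiv_apply_nonpos_of_isLocalMax hw hmax _

theorem lap_eq_laplacian {N : ℕ} {w : EuclideanSpace ℝ (Fin N) → ℝ}
    {a : EuclideanSpace ℝ (Fin N)} (hw : ContDiffAt ℝ 2 w a) : lap w a = Δ w a := by
  have hdiff : DifferentiableAt ℝ (fderiv ℝ w) a :=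
    (hw.fderiv_right (m := 1) le_rfl).differentiableAt one_ne_zero
  rw [InnerProductSpace.laplacian_eq_iteratedFDeriv_orthonormalBasis w
    (EuclideanSpace.basisFun (Fin N) ℝ)]
  refine Finset.sum_congr rfl fun i _ => ?_
  simp [iteratedFDeriv_two_apply, fderiv_clm_apply hdiff (differentiableAt_const _)]

theorem mul_lap_le_lap_of_isLocalMax {N : ℕ} {u v : EuclideanSpace ℝ (Fin N) → ℝ}
    {a : EuclideanSpace ℝ (Fin N)} (hu : ContDiffAt ℝ 2 u a) (hv : ContDiffAt ℝ 2 v a) {k : ℝ}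
    (hmax : IsLocalMax (k • u - v) a) : k * lap u a ≤ lap v a := by
  have hku : ContDiffAt ℝ 2 (k • u) a := hu.const_smul k
  have hsub : ContDiffAt ℝ 2 (k • u - v) a := hku.sub hv
  have h := lap_nonpos_of_isLocalMax hsub hmax
  rw [lap_eq_laplacian hsub, hku.laplacian_sub hv,
    InnerProductSpace.laplacian_smul k hu, ← lap_eq_laplacian hu, ← lap_eq_laplacian hv] at h
  simpa using h

theorem rpow_add_mul_sub_le_rpow {a b q : ℝ} (ha : 0 < a) (hb : 0 ≤ b) (hq : 1 ≤ q) :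
    a ^ q + q * a ^ (q - 1) * (b - a) ≤ b ^ q := by
  have hbernoulli := one_add_mul_self_le_rpow_one_add (s := b / a - 1)
    (by linarith [div_nonneg hb ha.le]) hq
  rw [add_sub_cancel, div_rpow hb ha.le, le_div_iff₀ (by positivity)] at hbernoulli
  calc a ^ q + q * a ^ (q - 1) * (b - a) = (1 + q * (b / a - 1)) * a ^ q := by
        rw [rpow_sub_one ha.ne']; field_simp
    _ ≤ b ^ q := hbernoulli

/-- `w` is a nonnegative classical function on `Ω` with zero Dirichlet data: the class to which
both components of a solution belong. Only continuity is required up to the boundary. -/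
structure IsDirichletFun {N : ℕ} (Ω : Set (EuclideanSpace ℝ (Fin N)))
    (w : EuclideanSpace ℝ (Fin N) → ℝ) : Prop where
  contDiffOn : ContDiffOn ℝ 2 w Ω
  continuousOn : ContinuousOn w (closure Ω)
  nonneg : ∀ x ∈ Ω, 0 ≤ w x
  eq_zero : ∀ x ∈ frontier Ω, w x = 0

/-- `(u, v)` is a classical solution of `-Δu = λ(v+1)^p`, `-Δv = γ(u+1)^θ` in `Ω` with zero
Dirichlet data. -/
structure IsDirichletSolution {N : ℕ} (Ω : Set (EuclideanSpace ℝ (Fin N))) (lam gam p θ : ℝ)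
    (u v : EuclideanSpace ℝ (Fin N) → ℝ) : Prop where
  fst : IsDirichletFun Ω u
  snd : IsDirichletFun Ω v
  neg_lap_fst : ∀ x ∈ Ω, -lap u x = lam * (v x + 1) ^ p
  neg_lap_snd : ∀ x ∈ Ω, -lap v x = gam * (u x + 1) ^ θ

section DirichletFun

variable {N : ℕ} {Ω : Set (EuclideanSpace ℝ (Fin N))} {w : EuclideanSpace ℝ (Fin N) → ℝ}

theorem IsDirichletFun.nonneg_of_mem_closure (hw : IsDirichletFun Ω w)
    {x : EuclideanSpace ℝ (Fin N)} (hx : x ∈ closure Ω) : 0 ≤ w x := by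
  rw [closure_eq_self_union_frontier] at hx
  exact hx.elim (hw.nonneg x) fun hfr => (hw.eq_zero x hfr).ge

theorem IsDirichletFun.add_one_pos (hw : IsDirichletFun Ω w) {x : EuclideanSpace ℝ (Fin N)}
    (hx : x ∈ closure Ω) : 0 < w x + 1 := by
  linarith [hw.nonneg_of_mem_closure hx]

theorem IsDirichletFun.continuousOn_add_one_rpow (hw : IsDirichletFun Ω w) (q : ℝ) :
    ContinuousOn (fun x => (w x + 1) ^ q) (closure Ω) :=
  (hw.continuousOn.add continuousOn_const).rpow_const fun _ hx => .inl (hw.add_one_pos hx).ne'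

end DirichletFun

theorem exists_mem_isMaxOn_of_frontier_le {E : Type*} [PseudoMetricSpace E] [ProperSpace E]
    {Ω : Set E} (hΩo : IsOpen Ω) (hΩb : Bornology.IsBounded Ω) {f : E → ℝ}
    (hf : ContinuousOn f (closure Ω)) {m : ℝ} (hm : ∀ x ∈ frontier Ω, f x ≤ m) {x : E}
    (hx : x ∈ Ω) (hfx : m < f x) : ∃ a ∈ Ω, IsMaxOn f Ω a ∧ m < f a := by
  obtain ⟨a, ha, hmax⟩ := hΩb.isCompact_closure.exists_isMaxOn ⟨x, subset_closure hx⟩ hf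
  have hlt : m < f a := hfx.trans_le (hmax (subset_closure hx))
  have haΩ : a ∈ Ω := by
    by_contra ha'
    exact hlt.not_ge (hm a (hΩo.frontier_eq ▸ ⟨ha, ha'⟩))
  exact ⟨a, haΩ, hmax.on_subset subset_closure, hlt⟩

theorem isMaxOn_smul_sub_of_isMaxOn_rpow {X : Type*} {s : Set X} {u v : X → ℝ} {c q : ℝ}
    (hc : 0 ≤ c) (hq : 1 ≤ q) (hu : ∀ x ∈ s, 0 < u x + 1) {a : X} (ha : a ∈ s)
    (hmax : IsMaxOn (fun x => c * (u x + 1) ^ q - v x) s a) :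
    IsMaxOn ((c * (q * (u a + 1) ^ (q - 1))) • u - v) s a := by
  intro x hx
  have htangent := mul_le_mul_of_nonneg_left
    (rpow_add_mul_sub_le_rpow (hu a ha) (hu x hx).le hq) hc
  have hle : c * (u x + 1) ^ q - v x ≤ c * (u a + 1) ^ q - v a := hmax hx
  simp only [mem_ofPred_eq, Pi.sub_apply, Pi.smul_apply, smul_eq_mul]
  linarith

section Comparison

variable {N : ℕ} {Ω : Set (EuclideanSpace ℝ (Fin N))} {lam gam p θ c : ℝ}
  {u v : EuclideanSpace ℝ (Fin N) → ℝ}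

-- At an interior maximum of `c(u+1)^α - v`, `α = (θ+1)/(p+1)`, convexity lets us replace
-- `c(u+1)^α` by its tangent `k u`, and `k Δu ≤ Δv` contradicts the equations.
theorem IsDirichletSolution.mul_rpow_le (h : IsDirichletSolution Ω lam gam p θ u v)
    (hΩo : IsOpen Ω) (hΩb : Bornology.IsBounded Ω) (hlam : 0 < lam) (hp : 0 < p) (hpθ : p ≤ θ)
    (hc : 0 < c) (hgam : c ^ (p + 1) * ((θ + 1) / (p + 1)) * lam = gam)
    {x : EuclideanSpace ℝ (Fin N)} (hx : x ∈ Ω) :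
    c * (u x + 1) ^ ((θ + 1) / (p + 1)) ≤ v x + 1 + c := by
  set α := (θ + 1) / (p + 1) with hα_def
  have hα : 1 ≤ α := by rw [hα_def, le_div_iff₀ (by linarith)]; linarith
  by_contra! hlt
  obtain ⟨a, ha, hmax, hlt_a⟩ := exists_mem_isMaxOn_of_frontier_le (m := 1 + c) hΩo hΩb
    (f := fun x => c * (u x + 1) ^ α - v x)
    ((continuousOn_const.mul (h.fst.continuousOn_add_one_rpow α)).sub h.snd.continuousOn)
    (fun y hy => by simp [h.fst.eq_zero y hy, h.snd.eq_zero y hy]) hx (by linarith)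
  have hU : 0 < u a + 1 := h.fst.add_one_pos (subset_closure ha)
  have hV : 0 < v a + 1 := h.snd.add_one_pos (subset_closure ha)
  set k := c * (α * (u a + 1) ^ (α - 1)) with hk_def
  have hlap : k * lap u a ≤ lap v a :=
    mul_lap_le_lap_of_isLocalMax (h.fst.contDiffOn.contDiffAt (hΩo.mem_nhds ha))
      (h.snd.contDiffOn.contDiffAt (hΩo.mem_nhds ha))
      ((isMaxOn_smul_sub_of_isMaxOn_rpow hc.le hα
        (fun y hy => h.fst.add_one_pos (subset_closure hy)) ha hmax).isLocalMax
          (hΩo.mem_nhds ha))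
  have hbalance : k * (lam * (c * (u a + 1) ^ α) ^ p) = gam * (u a + 1) ^ θ := by
    have hθ : α - 1 + α * p = θ := by rw [hα_def]; field_simp; ring
    rw [mul_rpow hc.le (by positivity), ← rpow_mul hU.le, ← hgam, rpow_add_one hc.ne', ← hθ,
      rpow_add hU, hk_def]
    ring
  have hpow : (v a + 1) ^ p < (c * (u a + 1) ^ α) ^ p := rpow_lt_rpow hV.le (by linarith) hp
  have hgap : k * (lam * (v a + 1) ^ p) < gam * (u a + 1) ^ θ := by
    rw [← hbalance]; gcongr
  linarith [h.neg_lap_snd a ha, congrArg (k * ·) (h.neg_lap_fst a ha)]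

end Comparison

theorem exists_rpow_le_mul_of_isDirichletSolution {N : ℕ} {Ω : Set (EuclideanSpace ℝ (Fin N))}
    (hΩo : IsOpen Ω) (hΩb : Bornology.IsBounded Ω) {p θ σ : ℝ} (hp : 0 < p) (hpθ : p ≤ θ)
    (hσ : 0 < σ) : ∃ T > 0, ∀ lam > 0, ∀ u v : EuclideanSpace ℝ (Fin N) → ℝ,
      IsDirichletSolution Ω lam (σ * lam) p θ u v →
        ∀ x ∈ Ω, (u x + 1) ^ ((θ + 1) / (p + 1)) ≤ T * (v x + 1) := by
  have hα : 0 < (θ + 1) / (p + 1) := div_pos (by linarith) (by linarith)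
  set c := (σ / ((θ + 1) / (p + 1))) ^ (p + 1)⁻¹ with hc_def
  have hc : 0 < c := rpow_pos_of_pos (div_pos hσ hα) _
  have hcσ : c ^ (p + 1) * ((θ + 1) / (p + 1)) = σ := by
    rw [hc_def, rpow_inv_rpow (div_pos hσ hα).le (by linarith), div_mul_cancel₀ _ hα.ne']
  refine ⟨(1 + c) / c, by positivity, fun lam hlam u v h x hx => ?_⟩
  have hle := h.mul_rpow_le hΩo hΩb hlam hp hpθ hc (by rw [hcσ]) hx
  have hv := mul_nonneg hc.le (h.snd.nonneg x hx)
  rw [div_mul_eq_mul_div, le_div_iff₀' hc]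
  linarith

/-- `C¹` compactly supported test functions in `Ω`: the class, larger than `IsTestFun Ω`, that
contains the truncated powers of a solution. -/
structure IsC1TestFun {N : ℕ} (Ω : Set (EuclideanSpace ℝ (Fin N)))
    (φ : EuclideanSpace ℝ (Fin N) → ℝ) : Prop where
  contDiff : ContDiff ℝ 1 φ
  hasCompactSupport : HasCompactSupport φ
  tsupport_subset : tsupport φ ⊆ Ω

theorem contDiff_indicator_of_eq_zero {E F : Type*} [NormedAddCommGroup E] [NormedSpace ℝ E]
    [NormedAddCommGroup F] [NormedSpace ℝ F] {n : WithTop ℕ∞} {Ω K : Set E} (hΩ : IsOpen Ω)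
    (hK : IsClosed K) (hKΩ : K ⊆ Ω) {h : E → F} (hh : ContDiffOn ℝ n h Ω)
    (hzero : ∀ x ∈ Ω \ K, h x = 0) : ContDiff ℝ n (Ω.indicator h) := by
  refine contDiff_iff_contDiffAt.2 fun x => ?_
  by_cases hx : x ∈ Ω
  · have hnhds : Ω ∈ 𝓝 x := hΩ.mem_nhds hx
    exact (hh.contDiffAt hnhds).congr_of_eventuallyEq
      (mem_of_superset hnhds fun y hy => indicator_of_mem hy h)
  · have hnhds : Kᶜ ∈ 𝓝 x := hK.isOpen_compl.mem_nhds fun hxK => hx (hKΩ hxK)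
    refine (contDiffAt_const (c := (0 : F))).congr_of_eventuallyEq
      (mem_of_superset hnhds fun y hyK => ?_)
    exact indicator_apply_eq_zero.2 fun hyΩ => hzero y ⟨hyΩ, hyK⟩

section TestFun

variable {N : ℕ} {Ω : Set (EuclideanSpace ℝ (Fin N))} {w φ : EuclideanSpace ℝ (Fin N) → ℝ}

theorem IsDirichletFun.isC1TestFun_indicator (hw : IsDirichletFun Ω w) (hΩo : IsOpen Ω)
    (hΩb : Bornology.IsBounded Ω) {h : EuclideanSpace ℝ (Fin N) → ℝ} (hh : ContDiffOn ℝ 1 h Ω)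
    (hzero : ∀ x ∈ Ω, w x ≤ 1 → h x = 0) : IsC1TestFun Ω (Ω.indicator h) := by
  let K : Set (EuclideanSpace ℝ (Fin N)) := closure Ω ∩ w ⁻¹' Ici 1
  have hKclosed : IsClosed K := hw.continuousOn.preimage_isClosed_of_isClosed isClosed_closure
    isClosed_Ici
  have hKcompact : IsCompact K :=
    hΩb.isCompact_closure.of_isClosed_subset hKclosed inter_subset_left
  have hKΩ : K ⊆ Ω := by
    rintro x ⟨hx, hwx : 1 ≤ w x⟩
    by_contra hxΩ
    linarith [hw.eq_zero x (hΩo.frontier_eq ▸ ⟨hx, hxΩ⟩)]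
  have hzeroK : ∀ x ∈ Ω \ K, h x = 0 := fun x ⟨hxΩ, hxK⟩ =>
    hzero x hxΩ (not_le.1 fun hwx => hxK ⟨subset_closure hxΩ, hwx⟩).le
  have hsupport : Function.support (Ω.indicator h) ⊆ K := by
    rw [support_indicator]
    rintro x ⟨hxΩ, hx⟩
    by_contra hxK
    exact hx (hzeroK x ⟨hxΩ, hxK⟩)
  exact ⟨contDiff_indicator_of_eq_zero hΩo hKclosed hKΩ hh hzeroK,
    .of_support_subset_isCompact hKcompact hsupport,
    (closure_minimal hsupport hKclosed).trans hKΩ⟩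

theorem IsC1TestFun.continuous_fderiv (hφ : IsC1TestFun Ω φ) : Continuous (fderiv ℝ φ) :=
  hφ.contDiff.continuous_fderiv one_ne_zero

theorem IsC1TestFun.integrable_fderiv_apply (hφ : IsC1TestFun Ω φ)
    (e : EuclideanSpace ℝ (Fin N)) : Integrable fun x => fderiv ℝ φ x e :=
  (hφ.continuous_fderiv.clm_apply continuous_const).integrable_of_hasCompactSupport
    (hφ.hasCompactSupport.fderiv_apply ℝ e)

theorem IsC1TestFun.integrable_norm_fderiv_sq (hφ : IsC1TestFun Ω φ) :
    Integrable fun x => ‖fderiv ℝ φ x‖ ^ 2 := by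
  have hcompact : HasCompactSupport fun x => ‖fderiv ℝ φ x‖ ^ 2 :=
    (hφ.hasCompactSupport.fderiv ℝ).comp_left (g := fun L => ‖L‖ ^ 2) (by simp)
  exact (hφ.continuous_fderiv.norm.pow 2).integrable_of_hasCompactSupport hcompact

theorem IsC1TestFun.setIntegral_fderiv_apply (hφ : IsC1TestFun Ω φ)
    (e : EuclideanSpace ℝ (Fin N)) : ∫ x in Ω, fderiv ℝ φ x e = 0 := by
  have hcompl (x) (hx : x ∉ Ω) : fderiv ℝ φ x e = 0 := by
    rw [fderiv_of_notMem_tsupport ℝ fun hxs => hx (hφ.tsupport_subset hxs)]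
    rfl
  have hparts := integral_mul_fderiv_eq_neg_fderiv_mul_of_integrable
    (μ := (volume : Measure (EuclideanSpace ℝ (Fin N)))) (f := fun _ => (1 : ℝ)) (g := φ) (v := e)
    (by simp) (by simpa using hφ.integrable_fderiv_apply e)
    (by simpa using hφ.contDiff.continuous.integrable_of_hasCompactSupport hφ.hasCompactSupport)
    (fun _ _ => differentiableAt_const _)
    (fun _ _ => hφ.contDiff.differentiable one_ne_zero _)
  rw [setIntegral_eq_integral_of_forall_compl_eq_zero hcompl]
  simpa using hparts

end TestFun

section Mollification

theorem fderiv_normed_convolution {E : Type*} [NormedAddCommGroup E] [NormedSpace ℝ E]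
    [FiniteDimensional ℝ E] [MeasurableSpace E] [BorelSpace E] {μ : Measure E}
    [μ.IsAddHaarMeasure] (b : ContDiffBump (0 : E)) {φ : E → ℝ} (hφ : ContDiff ℝ 1 φ)
    (hc : HasCompactSupport φ) (x : E) :
    fderiv ℝ (b.normed μ ⋆[.lsmul ℝ ℝ, μ] φ) x = (b.normed μ ⋆[.lsmul ℝ ℝ, μ] fderiv ℝ φ) x := by
  rw [(hc.hasFDerivAt_convolution_right (.lsmul ℝ ℝ) b.continuous_normed.locallyIntegrable hφ
    x).fderiv]
  rfl

variable {N : ℕ} {Ω : Set (EuclideanSpace ℝ (Fin N))} {φ : EuclideanSpace ℝ (Fin N) → ℝ}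

theorem IsC1TestFun.isTestFun_normed_convolution (hφ : IsC1TestFun Ω φ)
    (b : ContDiffBump (0 : EuclideanSpace ℝ (Fin N)))
    (hb : cthickening b.rOut (tsupport φ) ⊆ Ω) :
    IsTestFun Ω (b.normed volume ⋆[.lsmul ℝ ℝ, volume] φ) := by
  have hsupport : Function.support (b.normed volume ⋆[.lsmul ℝ ℝ, volume] φ) ⊆
      cthickening b.rOut (tsupport φ) := by
    intro x hx
    obtain ⟨y, hy, z, hz, rfl⟩ := support_convolution_subset _ hx
    rw [b.support_normed_eq, mem_ball_zero_iff] at hy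
    refine mem_cthickening_of_dist_le (y + z) z _ _ (subset_tsupport _ hz) ?_
    simpa [dist_eq_norm] using hy.le
  exact ⟨b.hasCompactSupport_normed.contDiff_convolution_left _ b.contDiff_normed
      hφ.contDiff.continuous.locallyIntegrable,
    .of_support_subset_isCompact hφ.hasCompactSupport.isCompact.cthickening hsupport,
    (closure_minimal hsupport isClosed_cthickening).trans hb⟩

theorem IsC1TestFun.exists_isTestFun_dist_le (hφ : IsC1TestFun Ω φ) (hΩo : IsOpen Ω) {ε : ℝ}
    (hε : 0 < ε) : ∃ ψ, IsTestFun Ω ψ ∧ (∀ x, dist (ψ x) (φ x) ≤ ε) ∧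
      ∀ x, dist (fderiv ℝ ψ x) (fderiv ℝ φ x) ≤ ε := by
  obtain ⟨δ₀, hδ₀, hδ₀Ω⟩ :=
    hφ.hasCompactSupport.isCompact.exists_cthickening_subset_open hΩo hφ.tsupport_subset
  obtain ⟨δ₁, hδ₁, hφ_dist⟩ := Metric.uniformContinuous_iff.1
    (hφ.hasCompactSupport.uniformContinuous_of_continuous hφ.contDiff.continuous) ε hε
  obtain ⟨δ₂, hδ₂, hdφ_dist⟩ := Metric.uniformContinuous_iff.1
    ((hφ.hasCompactSupport.fderiv ℝ).uniformContinuous_of_continuous hφ.continuous_fderiv) ε hε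
  have hδ : 0 < min δ₀ (min δ₁ δ₂) := by positivity
  let b : ContDiffBump (0 : EuclideanSpace ℝ (Fin N)) :=
    ⟨min δ₀ (min δ₁ δ₂) / 2, min δ₀ (min δ₁ δ₂), half_pos hδ, half_lt_self hδ⟩
  have hb₀ : b.rOut ≤ δ₀ := min_le_left _ _
  have hb₁ : b.rOut ≤ δ₁ := (min_le_right _ _).trans (min_le_left _ _)
  have hb₂ : b.rOut ≤ δ₂ := (min_le_right _ _).trans (min_le_right _ _)
  refine ⟨b.normed volume ⋆[.lsmul ℝ ℝ, volume] φ,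
    hφ.isTestFun_normed_convolution b ((cthickening_mono hb₀ _).trans hδ₀Ω), fun x => ?_,
    fun x => ?_⟩
  · exact ContDiffBump.dist_normed_convolution_le hφ.contDiff.continuous.aestronglyMeasurable
      fun y hy => (hφ_dist ((mem_ball.1 hy).trans_le hb₁)).le
  · rw [fderiv_normed_convolution b hφ.contDiff hφ.hasCompactSupport]
    exact ContDiffBump.dist_normed_convolution_le hφ.continuous_fderiv.aestronglyMeasurable
      fun y hy => (hdφ_dist ((mem_ball.1 hy).trans_le hb₂)).le

theorem IsC1TestFun.exists_tendstoUniformly_isTestFun (hφ : IsC1TestFun Ω φ) (hΩo : IsOpen Ω) :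
    ∃ ψ : ℕ → EuclideanSpace ℝ (Fin N) → ℝ, (∀ n, IsTestFun Ω (ψ n)) ∧
      TendstoUniformly ψ φ atTop ∧
      TendstoUniformly (fun n => fderiv ℝ (ψ n)) (fderiv ℝ φ) atTop := by
  choose ψ hψ hdist hdist_fderiv using fun n : ℕ =>
    hφ.exists_isTestFun_dist_le hΩo (Nat.one_div_pos_of_nat (α := ℝ) (n := n))
  have hlt {ε : ℝ} (hε : 0 < ε) : ∀ᶠ n : ℕ in atTop, 1 / ((n : ℝ) + 1) < ε :=
    tendsto_one_div_add_atTop_nhds_zero_nat.eventually_lt_const hε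
  refine ⟨ψ, hψ, Metric.tendstoUniformly_iff.2 fun ε hε => ?_,
    Metric.tendstoUniformly_iff.2 fun ε hε => ?_⟩
  · filter_upwards [hlt hε] with n hn x
    exact dist_comm (ψ n x) _ ▸ (hdist n x).trans_lt hn
  · filter_upwards [hlt hε] with n hn x
    exact dist_comm (fderiv ℝ (ψ n) x) _ ▸ (hdist_fderiv n x).trans_lt hn

theorem tendsto_integral_mul_norm_sq_of_tendstoUniformly {X F : Type*} [MeasurableSpace X]
    [NormedAddCommGroup F] {μ : Measure X} {ρ : X → ℝ} {ψ : ℕ → X → F} {f : X → F}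
    (hρ : Integrable ρ μ) (hψ : ∀ n, AEStronglyMeasurable (ψ n) μ) {M : ℝ}
    (hf : ∀ x, ‖f x‖ ≤ M) (hlim : TendstoUniformly ψ f atTop) :
    Tendsto (fun n => ∫ x, ρ x * ‖ψ n x‖ ^ 2 ∂μ) atTop (𝓝 (∫ x, ρ x * ‖f x‖ ^ 2 ∂μ)) := by
  refine tendsto_integral_filter_of_dominated_convergence (fun x => ‖ρ x‖ * (M + 1) ^ 2)
    (.of_forall fun n => hρ.aestronglyMeasurable.mul ((hψ n).norm.pow 2)) ?_
    (hρ.norm.mul_const _)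
    (.of_forall fun x => ((hlim.tendsto_at x).norm.pow 2).const_mul _)
  filter_upwards [Metric.tendstoUniformly_iff.1 hlim 1 one_pos] with n hn
  refine .of_forall fun x => ?_
  have hbound : ‖ψ n x‖ ≤ M + 1 := by
    have hdist := hn x
    rw [dist_eq_norm'] at hdist
    linarith [norm_le_norm_add_norm_sub' (ψ n x) (f x), hf x]
  rw [norm_mul, norm_pow, norm_norm]
  gcongr

theorem norm_gradient {E : Type*} [NormedAddCommGroup E] [InnerProductSpace ℝ E]
    [CompleteSpace E] (f : E → ℝ) (x : E) : ‖gradient f x‖ = ‖fderiv ℝ f x‖ :=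
  LinearIsometryEquiv.norm_map _ _

/-- The weight multiplying `φ²` in the stability inequality `IsStable`. -/
def stabilityWeight {N : ℕ} (p θ : ℝ) (u v : EuclideanSpace ℝ (Fin N) → ℝ)
    (x : EuclideanSpace ℝ (Fin N)) : ℝ :=
  (v x + 1) ^ ((p - 1) / 2) * (u x + 1) ^ ((θ - 1) / 2)

theorem IsStable.le_of_isC1TestFun {lam gam p θ : ℝ} {u v : EuclideanSpace ℝ (Fin N) → ℝ}
    (h : IsStable Ω lam gam p θ u v) (hΩo : IsOpen Ω) (hΩb : Bornology.IsBounded Ω)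
    (hW : IntegrableOn (stabilityWeight p θ u v) Ω) (hφ : IsC1TestFun Ω φ) :
    √(lam * gam * p * θ) * ∫ x in Ω, stabilityWeight p θ u v x * φ x ^ 2
      ≤ ∫ x in Ω, ‖fderiv ℝ φ x‖ ^ 2 := by
  obtain ⟨ψ, hψ, hlim, hlim_fderiv⟩ := hφ.exists_tendstoUniformly_isTestFun hΩo
  obtain ⟨M, hM⟩ := hφ.contDiff.continuous.bounded_above_of_compact_support hφ.hasCompactSupport
  obtain ⟨M', hM'⟩ :=
    hφ.continuous_fderiv.bounded_above_of_compact_support (hφ.hasCompactSupport.fderiv ℝ)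
  have hleft := tendsto_integral_mul_norm_sq_of_tendstoUniformly hW
    (fun n => (hψ n).1.continuous.aestronglyMeasurable) hM hlim
  have hright := tendsto_integral_mul_norm_sq_of_tendstoUniformly (ρ := fun _ => 1)
    (μ := volume.restrict Ω)
    (integrableOn_const hΩb.measure_lt_top.ne)
    (fun n => ((hψ n).1.continuous_fderiv (by simp)).aestronglyMeasurable) hM' hlim_fderiv
  simp only [one_mul, norm_eq_abs, sq_abs] at hleft hright
  refine le_of_tendsto_of_tendsto' (hleft.const_mul _) hright fun n => ?_
  simpa only [norm_gradient, stabilityWeight] using h (ψ n) (hψ n)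

end Mollification

theorem fderiv_indicator_of_mem {E F : Type*} [NormedAddCommGroup E] [NormedSpace ℝ E]
    [NormedAddCommGroup F] [NormedSpace ℝ F] {Ω : Set E} (hΩ : IsOpen Ω) (h : E → F) {x : E}
    (hx : x ∈ Ω) : fderiv ℝ (Ω.indicator h) x = fderiv ℝ h x :=
  ((eqOn_indicator (s := Ω) (f := h)).eventuallyEq_of_mem (hΩ.mem_nhds hx)).fderiv_eq

theorem norm_fderiv_comp_sq {E : Type*} [NormedAddCommGroup E] [NormedSpace ℝ E] {G : ℝ → ℝ}
    {w : E → ℝ} {a : E} (hG : DifferentiableAt ℝ G (w a)) (hw : DifferentiableAt ℝ w a) :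
    ‖fderiv ℝ (fun x => G (w x)) a‖ ^ 2 = deriv G (w a) ^ 2 * ‖fderiv ℝ w a‖ ^ 2 := by
  have hcomp : HasFDerivAt (fun x => G (w x)) (deriv G (w a) • fderiv ℝ w a) a :=
    hG.hasDerivAt.comp_hasFDerivAt a hw.hasFDerivAt
  rw [hcomp.fderiv, norm_smul, mul_pow, norm_eq_abs, sq_abs]

section IntegrationByParts

variable {N : ℕ} {w : EuclideanSpace ℝ (Fin N) → ℝ}

theorem sum_fderiv_comp_mul_fderiv {H : ℝ → ℝ} {a : EuclideanSpace ℝ (Fin N)}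
    (hH : DifferentiableAt ℝ H (w a)) (hw : ContDiffAt ℝ 2 w a) :
    ∑ i : Fin N, fderiv ℝ (fun x => H (w x) * fderiv ℝ w x (EuclideanSpace.single i 1)) a
      (EuclideanSpace.single i 1) = deriv H (w a) * ‖fderiv ℝ w a‖ ^ 2 + H (w a) * lap w a := by
  have hcomp : HasFDerivAt (fun x => H (w x)) (deriv H (w a) • fderiv ℝ w a) a :=
    hH.hasDerivAt.comp_hasFDerivAt a (hw.differentiableAt two_ne_zero).hasFDerivAt
  have hpartial (i : Fin N) :
      DifferentiableAt ℝ (fun x => fderiv ℝ w x (EuclideanSpace.single i 1)) a :=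
    ((hw.fderiv_right (m := 1) le_rfl).differentiableAt one_ne_zero).clm_apply
      (differentiableAt_const _)
  rw [(EuclideanSpace.basisFun (Fin N) ℝ).norm_dual, lap, Finset.mul_sum, Finset.mul_sum,
    ← Finset.sum_add_distrib]
  refine Finset.sum_congr rfl fun i _ => ?_
  have hproduct := (hcomp.mul (hpartial i).hasFDerivAt).fderiv
  change fderiv ℝ (fun x => H (w x) * fderiv ℝ w x (EuclideanSpace.single i 1)) a = _ at hproduct
  simp only [hproduct, EuclideanSpace.basisFun_apply, add_apply, smul_apply, smul_eq_mul]
  ring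

variable {Ω : Set (EuclideanSpace ℝ (Fin N))}

theorem IsDirichletFun.setIntegral_norm_fderiv_indicator_sq (hw : IsDirichletFun Ω w)
    (hΩo : IsOpen Ω) (hΩb : Bornology.IsBounded Ω) {G H : ℝ → ℝ} (hG : ContDiff ℝ 1 G)
    (hH : ContDiff ℝ 1 H) (hderiv : ∀ t, deriv H t = deriv G t ^ 2) (hG₀ : ∀ t ≤ 1, G t = 0)
    (hH₀ : ∀ t ≤ 1, H t = 0) :
    ∫ x in Ω, ‖fderiv ℝ (Ω.indicator fun y => G (w y)) x‖ ^ 2 =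
      ∫ x in Ω, H (w x) * -lap w x := by
  have hw₁ : ContDiffOn ℝ 1 w Ω := hw.contDiffOn.of_le one_le_two
  have hφ : IsC1TestFun Ω (Ω.indicator fun y => G (w y)) :=
    hw.isC1TestFun_indicator hΩo hΩb (hG.comp_contDiffOn hw₁) fun x _ => hG₀ (w x)
  let flux (i : Fin N) (x : EuclideanSpace ℝ (Fin N)) : ℝ :=
    H (w x) * fderiv ℝ w x (EuclideanSpace.single i 1)
  have hflux (i : Fin N) : IsC1TestFun Ω (Ω.indicator (flux i)) := by
    refine hw.isC1TestFun_indicator hΩo hΩb ((hH.comp_contDiffOn hw₁).mul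
      ((hw.contDiffOn.fderiv_of_isOpen hΩo le_rfl).clm_apply contDiffOn_const)) ?_
    intro x _ hx
    simp only [flux, hH₀ _ hx, zero_mul]
  have hdiv : ∫ x in Ω, ∑ i, fderiv ℝ (Ω.indicator (flux i)) x (EuclideanSpace.single i 1) = 0 := by
    rw [integral_finsetSum _ fun i _ => ((hflux i).integrable_fderiv_apply _).integrableOn]
    exact Finset.sum_eq_zero fun i _ => (hflux i).setIntegral_fderiv_apply _
  have hpointwise : EqOn (fun x => H (w x) * -lap w x)
      (fun x => ‖fderiv ℝ (Ω.indicator fun y => G (w y)) x‖ ^ 2 -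
        ∑ i, fderiv ℝ (Ω.indicator (flux i)) x (EuclideanSpace.single i 1)) Ω := by
    intro x hx
    have hwx : ContDiffAt ℝ 2 w x := hw.contDiffOn.contDiffAt (hΩo.mem_nhds hx)
    simp only [fderiv_indicator_of_mem hΩo _ hx, flux]
    rw [sum_fderiv_comp_mul_fderiv (hH.differentiable one_ne_zero _) hwx,
      norm_fderiv_comp_sq (hG.differentiable one_ne_zero _) (hwx.differentiableAt two_ne_zero),
      hderiv]
    ring
  rw [setIntegral_congr_fun hΩo.measurableSet hpointwise,
    integral_sub hφ.integrable_norm_fderiv_sq.integrableOn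
      (integrable_finsetSum _ fun i _ => ((hflux i).integrable_fderiv_apply _).integrableOn),
    hdiv, sub_zero]

end IntegrationByParts

section PosPart

theorem hasDerivAt_posPart_rpow {q : ℝ} (hq : 1 < q) (t : ℝ) :
    HasDerivAt (fun t : ℝ => t⁺ ^ q) (q * t⁺ ^ (q - 1)) t := by
  have hcont (r : ℝ) (hr : 0 < r) : Continuous fun t : ℝ => t⁺ ^ r :=
    continuous_posPart.rpow_const fun _ => .inr hr.le
  have hne (t : ℝ) (ht : t ≠ 0) : HasDerivAt (fun t : ℝ => t⁺ ^ q) (q * t⁺ ^ (q - 1)) t := by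
    obtain ht | ht := ht.lt_or_gt
    · rw [posPart_eq_zero.2 ht.le, zero_rpow (by linarith), mul_zero]
      refine (hasDerivAt_const t 0).congr_of_eventuallyEq ?_
      filter_upwards [Iio_mem_nhds ht] with y hy
      rw [posPart_eq_zero.2 (mem_Iio.1 hy).le, zero_rpow (by linarith)]
    · rw [posPart_eq_self.2 ht.le]
      refine (hasDerivAt_rpow_const (.inr hq.le)).congr_of_eventuallyEq ?_
      filter_upwards [Ioi_mem_nhds ht] with y hy
      rw [posPart_eq_self.2 (mem_Ioi.1 hy).le]
  obtain rfl | ht := eq_or_ne t 0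
  · exact hasDerivAt_of_hasDerivAt_of_ne hne (hcont q (by linarith)).continuousAt
      ((hcont (q - 1) (by linarith)).const_mul q).continuousAt
  · exact hne t ht

theorem deriv_posPart_sub_one_rpow {q : ℝ} (hq : 1 < q) (t : ℝ) :
    deriv (fun t : ℝ => (t - 1)⁺ ^ q) t = q * (t - 1)⁺ ^ (q - 1) :=
  ((hasDerivAt_posPart_rpow hq (t - 1)).comp_sub_const t 1).deriv

theorem contDiff_posPart_sub_one_rpow {q : ℝ} (hq : 1 < q) :
    ContDiff ℝ 1 fun t : ℝ => (t - 1)⁺ ^ q := by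
  refine contDiff_one_iff_deriv.2
    ⟨fun t => ((hasDerivAt_posPart_rpow hq (t - 1)).comp_sub_const t 1).differentiableAt, ?_⟩
  rw [funext (deriv_posPart_sub_one_rpow hq)]
  exact ((continuous_posPart.comp (continuous_sub_right 1)).rpow_const
    fun _ => .inr (by linarith)).const_mul q

theorem exists_mul_add_one_rpow_le_posPart {c q : ℝ} (hc₀ : 0 ≤ c) (hc₁ : c < 1) (hq : 0 < q) :
    ∃ K ≥ 0, ∀ t, 0 ≤ t → c * (t + 1) ^ q ≤ (t - 1)⁺ ^ q + K := by
  set d := c ^ q⁻¹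
  have hd₀ : 0 ≤ d := rpow_nonneg hc₀ _
  have hd₁ : d < 1 := rpow_lt_one hc₀ hc₁ (inv_pos.2 hq)
  have hdq : d ^ q = c := rpow_inv_rpow hc₀ hq.ne'
  set R := (1 + d) / (1 - d)
  have : 0 ≤ R := div_nonneg (by linarith) (by linarith)
  refine ⟨c * (R + 1) ^ q, by positivity, fun t ht => ?_⟩
  obtain htR | htR := le_total t R
  · have hle : c * (t + 1) ^ q ≤ c * (R + 1) ^ q := by gcongr
    linarith [rpow_nonneg (posPart_nonneg (t - 1)) q]
  · have hdt : d * (t + 1) ≤ (t - 1)⁺ := by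
      rw [div_le_iff₀ (by linarith)] at htR
      linarith [le_posPart (t - 1)]
    have hle : c * (t + 1) ^ q ≤ (t - 1)⁺ ^ q := by
      rw [← hdq, ← mul_rpow hd₀ (by linarith)]
      gcongr
    linarith [show 0 ≤ c * (R + 1) ^ q by positivity]

end PosPart

/-- The ratio between `∫ |∇(w-1)₊^(s/2)|²` and `∫ (w-1)₊^(s-1) (-Δw)`. -/
def testConst (s : ℝ) : ℝ := s ^ 2 / (4 * (s - 1))

theorem testConst_pos {s : ℝ} (hs : 1 < s) : 0 < testConst s :=
  div_pos (by positivity) (by linarith)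

section TestEstimate

variable {N : ℕ} {Ω : Set (EuclideanSpace ℝ (Fin N))} {w W : EuclideanSpace ℝ (Fin N) → ℝ}

theorem IsDirichletFun.setIntegral_norm_fderiv_posPart_sq (hw : IsDirichletFun Ω w)
    (hΩo : IsOpen Ω) (hΩb : Bornology.IsBounded Ω) {s : ℝ} (hs : 2 < s) :
    ∫ x in Ω, ‖fderiv ℝ (Ω.indicator fun y => (w y - 1)⁺ ^ (s / 2)) x‖ ^ 2 =
      testConst s * ∫ x in Ω, (w x - 1)⁺ ^ (s - 1) * -lap w x := by
  have hzero {q : ℝ} (hq : 0 < q) (t : ℝ) (ht : t ≤ 1) : (t - 1)⁺ ^ q = 0 := by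
    rw [posPart_eq_zero.2 (sub_nonpos.2 ht), zero_rpow hq.ne']
  have hderiv (t : ℝ) : deriv (fun t => testConst s * (t - 1)⁺ ^ (s - 1)) t =
      deriv (fun t => (t - 1)⁺ ^ (s / 2)) t ^ 2 := by
    have hdouble : s - 1 - 1 = (s / 2 - 1) * (2 : ℕ) := by push_cast; ring
    rw [deriv_const_mul_field, deriv_posPart_sub_one_rpow (by linarith),
      deriv_posPart_sub_one_rpow (by linarith), mul_pow, hdouble,
      rpow_mul_natCast (posPart_nonneg _), testConst]
    have : s - 1 ≠ 0 := by linarith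
    field_simp
    norm_num
  rw [hw.setIntegral_norm_fderiv_indicator_sq hΩo hΩb
    (contDiff_posPart_sub_one_rpow (q := s / 2) (by linarith))
    (contDiff_const.mul (contDiff_posPart_sub_one_rpow (q := s - 1) (by linarith))) hderiv
    (hzero (by linarith)) fun t ht => by rw [hzero (by linarith) t ht, mul_zero]]
  simp only [mul_assoc, integral_const_mul]

theorem IsDirichletFun.mul_setIntegral_posPart_rpow_le (hw : IsDirichletFun Ω w)
    (hΩo : IsOpen Ω) (hΩb : Bornology.IsBounded Ω) {s κ : ℝ} (hs : 2 < s)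
    (hstable : ∀ φ, IsC1TestFun Ω φ →
      κ * ∫ x in Ω, W x * φ x ^ 2 ≤ ∫ x in Ω, ‖fderiv ℝ φ x‖ ^ 2) :
    κ * ∫ x in Ω, W x * (w x - 1)⁺ ^ s ≤
      testConst s * ∫ x in Ω, (w x - 1)⁺ ^ (s - 1) * -lap w x := by
  have hφ : IsC1TestFun Ω (Ω.indicator fun y => (w y - 1)⁺ ^ (s / 2)) := by
    refine hw.isC1TestFun_indicator hΩo hΩb ((contDiff_posPart_sub_one_rpow (by linarith)
      ).comp_contDiffOn (hw.contDiffOn.of_le one_le_two)) fun x _ hx => ?_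
    rw [posPart_eq_zero.2 (sub_nonpos.2 hx), zero_rpow (by linarith)]
  have hsquare : EqOn (fun x => W x * Ω.indicator (fun y => (w y - 1)⁺ ^ (s / 2)) x ^ 2)
      (fun x => W x * (w x - 1)⁺ ^ s) Ω := by
    intro x hx
    simp only [indicator_of_mem hx]
    rw [← rpow_mul_natCast (posPart_nonneg _), Nat.cast_ofNat, div_mul_cancel₀ _ two_ne_zero]
  rw [← setIntegral_congr_fun hΩo.measurableSet hsquare,
    ← hw.setIntegral_norm_fderiv_posPart_sq hΩo hΩb hs]
  exact hstable _ hφ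

theorem integrableOn_of_continuousOn_closure {E : Type*} [PseudoMetricSpace E] [ProperSpace E]
    [MeasurableSpace E] [BorelSpace E] {μ : Measure E} [IsFiniteMeasureOnCompacts μ] {Ω : Set E}
    (hΩb : Bornology.IsBounded Ω) {f : E → ℝ} (hf : ContinuousOn f (closure Ω)) :
    IntegrableOn f Ω μ :=
  (hf.integrableOn_compact' hΩb.isCompact_closure measurableSet_closure).mono_set subset_closure

theorem IsDirichletFun.mul_setIntegral_add_one_rpow_le (hw : IsDirichletFun Ω w)
    (hΩo : IsOpen Ω) (hΩb : Bornology.IsBounded Ω) {s κ c K : ℝ} (hs : 2 < s) (hκ : 0 ≤ κ)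
    (hK : ∀ t, 0 ≤ t → c * (t + 1) ^ s ≤ (t - 1)⁺ ^ s + K) (hW : ContinuousOn W (closure Ω))
    (hW₀ : ∀ x ∈ Ω, 0 ≤ W x) (hlap : ∀ x ∈ Ω, 0 ≤ -lap w x)
    (hint : IntegrableOn (fun x => (w x + 1) ^ (s - 1) * -lap w x) Ω)
    (hstable : ∀ φ, IsC1TestFun Ω φ →
      κ * ∫ x in Ω, W x * φ x ^ 2 ≤ ∫ x in Ω, ‖fderiv ℝ φ x‖ ^ 2) :
    κ * (c * (∫ x in Ω, W x * (w x + 1) ^ s) - K * ∫ x in Ω, W x) ≤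
      testConst s * ∫ x in Ω, (w x + 1) ^ (s - 1) * -lap w x := by
  have hposPart : ContinuousOn (fun x => (w x - 1)⁺ ^ s) (closure Ω) :=
    (continuous_posPart.comp_continuousOn (hw.continuousOn.sub continuousOn_const)).rpow_const
      fun _ _ => .inr (by linarith)
  have hleft : c * (∫ x in Ω, W x * (w x + 1) ^ s) - K * ∫ x in Ω, W x ≤
      ∫ x in Ω, W x * (w x - 1)⁺ ^ s := by
    have hW_int : IntegrableOn W Ω := integrableOn_of_continuousOn_closure hΩb hW
    have hpow_int : IntegrableOn (fun x => W x * (w x + 1) ^ s) Ω :=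
      integrableOn_of_continuousOn_closure hΩb (hW.mul (hw.continuousOn_add_one_rpow s))
    rw [← integral_const_mul, ← integral_const_mul,
      ← integral_sub (hpow_int.const_mul c) (hW_int.const_mul K)]
    refine setIntegral_mono_on ((hpow_int.const_mul c).sub (hW_int.const_mul K))
      (integrableOn_of_continuousOn_closure hΩb (hW.mul hposPart)) hΩo.measurableSet fun x hx => ?_
    linarith [mul_le_mul_of_nonneg_left (hK _ (hw.nonneg x hx)) (hW₀ x hx)]
  have hright : ∫ x in Ω, (w x - 1)⁺ ^ (s - 1) * -lap w x ≤
      ∫ x in Ω, (w x + 1) ^ (s - 1) * -lap w x := by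
    refine integral_mono_of_nonneg ?_ hint ?_
    · filter_upwards [ae_restrict_mem hΩo.measurableSet] with x hx
      exact mul_nonneg (rpow_nonneg (posPart_nonneg _) _) (hlap x hx)
    · filter_upwards [ae_restrict_mem hΩo.measurableSet] with x hx
      have hle : (w x - 1)⁺ ≤ w x + 1 :=
        sup_le (by linarith) (hw.add_one_pos (subset_closure hx)).le
      exact mul_le_mul_of_nonneg_right
        (rpow_le_rpow (posPart_nonneg _) hle (by linarith)) (hlap x hx)
  calc κ * (c * (∫ x in Ω, W x * (w x + 1) ^ s) - K * ∫ x in Ω, W x)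
      ≤ κ * ∫ x in Ω, W x * (w x - 1)⁺ ^ s := mul_le_mul_of_nonneg_left hleft hκ
    _ ≤ testConst s * ∫ x in Ω, (w x - 1)⁺ ^ (s - 1) * -lap w x :=
      hw.mul_setIntegral_posPart_rpow_le hΩo hΩb hs hstable
    _ ≤ testConst s * ∫ x in Ω, (w x + 1) ^ (s - 1) * -lap w x :=
      mul_le_mul_of_nonneg_left hright (testConst_pos (by linarith)).le

theorem IsDirichletFun.mul_setIntegral_le_of_neg_lap_eq (hw : IsDirichletFun Ω w)
    (hΩo : IsOpen Ω) (hΩb : Bornology.IsBounded Ω) {s κ c K lam : ℝ}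
    {f : EuclideanSpace ℝ (Fin N) → ℝ} (hs : 2 < s) (hκ : 0 ≤ κ) (hlam : 0 < lam)
    (hK : ∀ t, 0 ≤ t → c * (t + 1) ^ s ≤ (t - 1)⁺ ^ s + K) (hW : ContinuousOn W (closure Ω))
    (hW₀ : ∀ x ∈ Ω, 0 ≤ W x) (hf : ContinuousOn f (closure Ω)) (hf₀ : ∀ x ∈ Ω, 0 ≤ f x)
    (hlap : ∀ x ∈ Ω, -lap w x = lam * f x)
    (hstable : ∀ φ, IsC1TestFun Ω φ →
      lam * κ * ∫ x in Ω, W x * φ x ^ 2 ≤ ∫ x in Ω, ‖fderiv ℝ φ x‖ ^ 2) :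
    κ * (c * (∫ x in Ω, W x * (w x + 1) ^ s) - K * ∫ x in Ω, W x) ≤
      testConst s * ∫ x in Ω, (w x + 1) ^ (s - 1) * f x := by
  have hsource : EqOn (fun x => (w x + 1) ^ (s - 1) * -lap w x)
      (fun x => lam * ((w x + 1) ^ (s - 1) * f x)) Ω := fun x hx => by
    simp only [hlap x hx]
    ring
  have hint : IntegrableOn (fun x => lam * ((w x + 1) ^ (s - 1) * f x)) Ω :=
    (integrableOn_of_continuousOn_closure hΩb
      ((hw.continuousOn_add_one_rpow _).mul hf)).const_mul lam
  have hlap₀ : ∀ x ∈ Ω, 0 ≤ -lap w x := fun x hx =>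
    hlap x hx ▸ mul_nonneg hlam.le (hf₀ x hx)
  have hestimate := hw.mul_setIntegral_add_one_rpow_le hΩo hΩb hs (by positivity) hK hW hW₀
    hlap₀ (hint.congr_fun hsource.symm hΩo.measurableSet) hstable
  rw [setIntegral_congr_fun hΩo.measurableSet hsource, integral_const_mul] at hestimate
  refine le_of_mul_le_mul_left ?_ hlam
  linarith

end TestEstimate

section Parameters

theorem Lpoly_mul_sq {p θ : ℝ} (s : ℝ) (hp : p + 1 ≠ 0) (hθ : θ + 1 ≠ 0) :
    Lpoly p θ s * ((θ + 1) / (p + 1)) ^ 2 = s ^ 2 * ((θ + 1) / (p + 1) * s) ^ 2 -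
      16 * (p * θ) * (s - 1) * ((θ + 1) / (p + 1) * s - 1) := by
  rw [Lpoly]
  field_simp
  ring

theorem testConst_mul_testConst_lt {p θ s : ℝ} (hp : 0 < p) (hpθ : p ≤ θ) (hs : 1 < s)
    (hL : Lpoly p θ s < 0) : testConst s * testConst ((θ + 1) / (p + 1) * s) < p * θ := by
  have hα : 1 ≤ (θ + 1) / (p + 1) := by rw [le_div_iff₀ (by linarith)]; linarith
  have hr : 1 < (θ + 1) / (p + 1) * s := by nlinarith
  have hneg := mul_neg_of_neg_of_pos hL (sq_pos_of_pos (one_pos.trans_le hα))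
  rw [Lpoly_mul_sq s (by linarith) (by linarith)] at hneg
  rw [testConst, testConst, div_mul_div_comm,
    div_lt_iff₀ (mul_pos (by linarith) (by linarith))]
  linarith

theorem sqrt_mul_mul_mul_self {lam : ℝ} (hlam : 0 ≤ lam) (σ p θ : ℝ) :
    √(lam * (σ * lam) * p * θ) = lam * √(σ * p * θ) := by
  rw [show lam * (σ * lam) * p * θ = lam ^ 2 * (σ * p * θ) by ring, sqrt_mul (sq_nonneg lam),
    sqrt_sq hlam]

end Parameters

section PointwiseEstimates

-- Weighted AM-GM for `X` and `ωY`; the choice `ω^τ = √(a/b)` makes the two bounds add up.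
theorem exists_weight_geom_mean_le {a b τ : ℝ} (ha : 0 < a) (hb : 0 < b) (hτ₀ : 0 < τ)
    (hτ₁ : τ ≤ 1) : ∃ ω > 0, ∀ X Y, 0 ≤ X → 0 ≤ Y →
      a * (X ^ (1 - τ) * Y ^ τ) + ω * b * (X ^ τ * Y ^ (1 - τ)) ≤ √(a * b) * (X + ω * Y) := by
  set ω := √(a / b) ^ τ⁻¹
  have hω : 0 < ω := by positivity
  have hωτ : ω ^ τ = √(a / b) := rpow_inv_rpow (by positivity) hτ₀.ne'
  have ha_eq : a = √(a * b) * ω ^ τ := by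
    rw [hωτ, ← sqrt_mul (by positivity), show a * b * (a / b) = a ^ 2 by field_simp,
      sqrt_sq ha.le]
  have hb_eq : b * ω ^ τ = √(a * b) := by
    rw [hωτ, ← sqrt_sq hb.le, ← sqrt_mul (by positivity), sqrt_sq hb.le]
    congr 1
    field_simp
  refine ⟨ω, hω, fun X Y hX hY => ?_⟩
  have hfirst : X ^ (1 - τ) * (ω * Y) ^ τ ≤ (1 - τ) * X + τ * (ω * Y) :=
    geom_mean_le_arith_mean2_weighted (by linarith) hτ₀.le hX (by positivity) (by ring)
  have hsecond : X ^ τ * (ω * Y) ^ (1 - τ) ≤ τ * X + (1 - τ) * (ω * Y) :=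
    geom_mean_le_arith_mean2_weighted hτ₀.le (by linarith) hX (by positivity) (by ring)
  rw [mul_rpow hω.le hY] at hfirst hsecond
  have hω_split : ω = ω ^ τ * ω ^ (1 - τ) := by rw [← rpow_add hω, add_sub_cancel, rpow_one]
  calc a * (X ^ (1 - τ) * Y ^ τ) + ω * b * (X ^ τ * Y ^ (1 - τ))
      = √(a * b) * (X ^ (1 - τ) * (ω ^ τ * Y ^ τ)) +
          √(a * b) * (X ^ τ * (ω ^ (1 - τ) * Y ^ (1 - τ))) := by
        nth_rw 1 [ha_eq]
        nth_rw 2 [hω_split]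
        nth_rw 3 [← hb_eq]
        ring
    _ ≤ √(a * b) * ((1 - τ) * X + τ * (ω * Y)) + √(a * b) * (τ * X + (1 - τ) * (ω * Y)) := by
        gcongr
    _ = √(a * b) * (X + ω * Y) := by ring

theorem rpow_mul_rpow_mul_geom_mean {U V p θ s r τ : ℝ} (hU : 0 < U) (hV : 0 < V)
    (hs : s * τ = (p + 1) / 2) (hr : r * τ = (θ + 1) / 2) :
    V ^ ((p - 1) / 2) * U ^ ((θ - 1) / 2) * ((V ^ s) ^ (1 - τ) * (U ^ r) ^ τ) =
      V ^ (s - 1) * U ^ θ := by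
  have hs' : (p - 1) / 2 + s * (1 - τ) = s - 1 := by linarith
  have hr' : (θ - 1) / 2 + r * τ = θ := by linarith
  rw [← rpow_mul hV.le, ← rpow_mul hU.le, mul_mul_mul_comm, ← rpow_add hV, ← rpow_add hU, hs', hr']

theorem exists_weight_source_le {a b p θ s r τ : ℝ} (ha : 0 < a) (hb : 0 < b) (hτ₀ : 0 < τ)
    (hτ₁ : τ ≤ 1) (hs : s * τ = (p + 1) / 2) (hr : r * τ = (θ + 1) / 2) :
    ∃ ω > 0, ∀ U V : ℝ, 0 < U → 0 < V →
      a * (V ^ (s - 1) * U ^ θ) + ω * b * (U ^ (r - 1) * V ^ p) ≤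
        √(a * b) * (V ^ ((p - 1) / 2) * U ^ ((θ - 1) / 2) * (V ^ s + ω * U ^ r)) := by
  obtain ⟨ω, hω, hle⟩ := exists_weight_geom_mean_le ha hb hτ₀ hτ₁
  refine ⟨ω, hω, fun U V hU hV => ?_⟩
  rw [← rpow_mul_rpow_mul_geom_mean hU hV hs hr, ← rpow_mul_rpow_mul_geom_mean hV hU hr hs]
  have hmul := mul_le_mul_of_nonneg_left (hle (V ^ s) (U ^ r) (by positivity) (by positivity))
    (show 0 ≤ V ^ ((p - 1) / 2) * U ^ ((θ - 1) / 2) by positivity)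
  linarith

theorem le_mul_mul_add_of_le_mul_sq {W S A η : ℝ} (hW : 0 ≤ W) (hS : 0 ≤ S) (hA : 0 ≤ A)
    (hη : 0 < η) (h : W ≤ A * S ^ 2) : W ≤ η * (W * S) + A / η ^ 2 := by
  obtain hηS | hηS := le_total 1 (η * S)
  · have hle : W ≤ η * (W * S) := by nlinarith
    linarith [show 0 ≤ A / η ^ 2 by positivity]
  · have hle : A * S ^ 2 ≤ A / η ^ 2 := by
      rw [le_div_iff₀ (by positivity), mul_assoc, ← mul_pow, mul_comm S η]
      exact mul_le_of_le_one_right hA (pow_le_one₀ (by positivity) hηS)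
    linarith [show 0 ≤ η * (W * S) by positivity]

theorem rpow_mul_rpow_le_sq {U V a b s r ω : ℝ} (hU : 1 ≤ U) (hV : 1 ≤ V) (has : a ≤ s)
    (hbr : b ≤ r) (hω : 0 < ω) : V ^ a * U ^ b ≤ 1 / (4 * ω) * (V ^ s + ω * U ^ r) ^ 2 := by
  calc V ^ a * U ^ b ≤ V ^ s * U ^ r := by gcongr
    _ ≤ 1 / (4 * ω) * (V ^ s + ω * U ^ r) ^ 2 := by
      rw [one_div_mul_eq_div, le_div_iff₀ (by positivity)]
      linarith [four_mul_le_sq_add (V ^ s) (ω * U ^ r)]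

end PointwiseEstimates

/-- The energy density `(v+1)^((p-1)/2) (u+1)^((θ-1)/2) ((v+1)^s + ω (u+1)^r)`, obtained by adding
the stability inequalities tested with the powers `s/2` of `v` and `r/2` of `u`, the latter with
weight `ω`. -/
def energyDensity {N : ℕ} (p θ s r ω : ℝ) (u v : EuclideanSpace ℝ (Fin N) → ℝ)
    (x : EuclideanSpace ℝ (Fin N)) : ℝ :=
  stabilityWeight p θ u v x * ((v x + 1) ^ s + ω * (u x + 1) ^ r)

section Energy

variable {N : ℕ} {Ω : Set (EuclideanSpace ℝ (Fin N))} {p θ s r σ ω lam : ℝ}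
  {u v : EuclideanSpace ℝ (Fin N) → ℝ}

theorem continuousOn_stabilityWeight (hu : IsDirichletFun Ω u) (hv : IsDirichletFun Ω v)
    (p θ : ℝ) : ContinuousOn (stabilityWeight p θ u v) (closure Ω) :=
  (hv.continuousOn_add_one_rpow _).mul (hu.continuousOn_add_one_rpow _)

theorem stabilityWeight_nonneg (hu : IsDirichletFun Ω u) (hv : IsDirichletFun Ω v)
    {x : EuclideanSpace ℝ (Fin N)} (hx : x ∈ Ω) : 0 ≤ stabilityWeight p θ u v x :=
  mul_nonneg (rpow_nonneg (hv.add_one_pos (subset_closure hx)).le _)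
    (rpow_nonneg (hu.add_one_pos (subset_closure hx)).le _)

theorem energyDensity_nonneg (hu : IsDirichletFun Ω u) (hv : IsDirichletFun Ω v) (hω : 0 ≤ ω)
    {x : EuclideanSpace ℝ (Fin N)} (hx : x ∈ Ω) : 0 ≤ energyDensity p θ s r ω u v x :=
  mul_nonneg (stabilityWeight_nonneg hu hv hx) <|
    add_nonneg (rpow_nonneg (hv.add_one_pos (subset_closure hx)).le s)
      (mul_nonneg hω (rpow_nonneg (hu.add_one_pos (subset_closure hx)).le r))

theorem integrableOn_energyDensity (hu : IsDirichletFun Ω u) (hv : IsDirichletFun Ω v)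
    (hΩb : Bornology.IsBounded Ω) (p θ s r ω : ℝ) :
    IntegrableOn (energyDensity p θ s r ω u v) Ω :=
  integrableOn_of_continuousOn_closure hΩb <| (continuousOn_stabilityWeight hu hv p θ).mul <|
    (hv.continuousOn_add_one_rpow s).add
      (continuousOn_const.mul (hu.continuousOn_add_one_rpow r))

theorem setIntegral_energyDensity (hu : IsDirichletFun Ω u) (hv : IsDirichletFun Ω v)
    (hΩb : Bornology.IsBounded Ω) :
    ∫ x in Ω, energyDensity p θ s r ω u v x =
      (∫ x in Ω, stabilityWeight p θ u v x * (v x + 1) ^ s) +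
        ω * ∫ x in Ω, stabilityWeight p θ u v x * (u x + 1) ^ r := by
  have hW := continuousOn_stabilityWeight hu hv p θ
  have hint_v : IntegrableOn (fun x => stabilityWeight p θ u v x * (v x + 1) ^ s) Ω :=
    integrableOn_of_continuousOn_closure hΩb (hW.mul (hv.continuousOn_add_one_rpow s))
  have hint_u : IntegrableOn (fun x => stabilityWeight p θ u v x * (u x + 1) ^ r) Ω :=
    integrableOn_of_continuousOn_closure hΩb (hW.mul (hu.continuousOn_add_one_rpow r))
  rw [← integral_const_mul, ← integral_add hint_v (hint_u.const_mul ω)]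
  simp only [energyDensity, mul_add, mul_left_comm]

theorem mul_setIntegral_source_add_le (hu : IsDirichletFun Ω u) (hv : IsDirichletFun Ω v)
    (hΩo : IsOpen Ω) (hΩb : Bornology.IsBounded Ω) {a b ρ : ℝ}
    (hsource : ∀ U V : ℝ, 0 < U → 0 < V →
      a * (V ^ (s - 1) * U ^ θ) + ω * b * (U ^ (r - 1) * V ^ p) ≤
        ρ * (V ^ ((p - 1) / 2) * U ^ ((θ - 1) / 2) * (V ^ s + ω * U ^ r))) :
    a * (∫ x in Ω, (v x + 1) ^ (s - 1) * (u x + 1) ^ θ) +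
        ω * b * (∫ x in Ω, (u x + 1) ^ (r - 1) * (v x + 1) ^ p) ≤
      ρ * ∫ x in Ω, energyDensity p θ s r ω u v x := by
  have hint_v : IntegrableOn (fun x => a * ((v x + 1) ^ (s - 1) * (u x + 1) ^ θ)) Ω :=
    (integrableOn_of_continuousOn_closure hΩb ((hv.continuousOn_add_one_rpow (s - 1)).mul
      (hu.continuousOn_add_one_rpow θ))).const_mul a
  have hint_u : IntegrableOn (fun x => ω * b * ((u x + 1) ^ (r - 1) * (v x + 1) ^ p)) Ω :=
    (integrableOn_of_continuousOn_closure hΩb ((hu.continuousOn_add_one_rpow (r - 1)).mul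
      (hv.continuousOn_add_one_rpow p))).const_mul (ω * b)
  rw [← integral_const_mul, ← integral_const_mul, ← integral_const_mul,
    ← integral_add hint_v hint_u]
  exact setIntegral_mono_on (hint_v.add hint_u)
    ((integrableOn_energyDensity hu hv hΩb p θ s r ω).const_mul ρ) hΩo.measurableSet
    fun x hx => hsource _ _ (hu.add_one_pos (subset_closure hx))
      (hv.add_one_pos (subset_closure hx))

theorem IsDirichletSolution.mul_setIntegral_energyDensity_le
    (h : IsDirichletSolution Ω lam (σ * lam) p θ u v) (hstable : IsStable Ω lam (σ * lam) p θ u v)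
    (hΩo : IsOpen Ω) (hΩb : Bornology.IsBounded Ω) (hlam : 0 < lam) (hσ : 0 ≤ σ) (hs : 2 < s)
    (hr : 2 < r) (hω : 0 ≤ ω) {c K K' ρ : ℝ}
    (hK : ∀ t, 0 ≤ t → c * (t + 1) ^ s ≤ (t - 1)⁺ ^ s + K)
    (hK' : ∀ t, 0 ≤ t → c * (t + 1) ^ r ≤ (t - 1)⁺ ^ r + K')
    (hsource : ∀ U V : ℝ, 0 < U → 0 < V →
      σ * testConst s * (V ^ (s - 1) * U ^ θ) + ω * testConst r * (U ^ (r - 1) * V ^ p) ≤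
        ρ * (V ^ ((p - 1) / 2) * U ^ ((θ - 1) / 2) * (V ^ s + ω * U ^ r))) :
    √(σ * p * θ) * (c * (∫ x in Ω, energyDensity p θ s r ω u v x) -
        (K + ω * K') * ∫ x in Ω, stabilityWeight p θ u v x) ≤
      ρ * ∫ x in Ω, energyDensity p θ s r ω u v x := by
  have hW := continuousOn_stabilityWeight h.fst h.snd p θ
  have hW₀ : ∀ x ∈ Ω, 0 ≤ stabilityWeight p θ u v x := fun x =>
    stabilityWeight_nonneg h.fst h.snd
  have htest : ∀ φ, IsC1TestFun Ω φ →
      lam * √(σ * p * θ) * ∫ x in Ω, stabilityWeight p θ u v x * φ x ^ 2 ≤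
        ∫ x in Ω, ‖fderiv ℝ φ x‖ ^ 2 := fun φ hφ => by
    rw [← sqrt_mul_mul_mul_self hlam.le]
    exact hstable.le_of_isC1TestFun hΩo hΩb (integrableOn_of_continuousOn_closure hΩb hW) hφ
  have hsnd := h.snd.mul_setIntegral_le_of_neg_lap_eq hΩo hΩb hs (sqrt_nonneg _) hlam hK hW hW₀
    (f := fun x => σ * (u x + 1) ^ θ) (continuousOn_const.mul (h.fst.continuousOn_add_one_rpow θ))
    (fun x hx => mul_nonneg hσ (rpow_nonneg (h.fst.add_one_pos (subset_closure hx)).le θ))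
    (fun x hx => by rw [h.neg_lap_snd x hx]; ring) htest
  have hfst := h.fst.mul_setIntegral_le_of_neg_lap_eq hΩo hΩb hr (sqrt_nonneg _) hlam hK' hW hW₀
    (h.snd.continuousOn_add_one_rpow p)
    (fun x hx => rpow_nonneg (h.snd.add_one_pos (subset_closure hx)).le p) h.neg_lap_fst htest
  refine le_trans ?_ (mul_setIntegral_source_add_le h.fst h.snd hΩo hΩb hsource)
  simp only [mul_left_comm _ σ, integral_const_mul] at hsnd
  rw [setIntegral_energyDensity h.fst h.snd hΩb]
  linarith [mul_le_mul_of_nonneg_left hfst hω]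

theorem setIntegral_stabilityWeight_le (hu : IsDirichletFun Ω u) (hv : IsDirichletFun Ω v)
    (hΩo : IsOpen Ω) (hΩb : Bornology.IsBounded Ω) (hs : (p - 1) / 2 ≤ s)
    (hr : (θ - 1) / 2 ≤ r) (hω : 0 < ω) {η : ℝ} (hη : 0 < η) :
    ∫ x in Ω, stabilityWeight p θ u v x ≤
      η * (∫ x in Ω, energyDensity p θ s r ω u v x) +
        1 / (4 * ω) / η ^ 2 * volume.real Ω := by
  have hE := (integrableOn_energyDensity hu hv hΩb p θ s r ω).const_mul η
  have hconst : IntegrableOn (fun _ => 1 / (4 * ω) / η ^ 2) Ω :=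
    integrableOn_const hΩb.measure_lt_top.ne
  rw [mul_comm _ (volume.real Ω), ← smul_eq_mul (volume.real Ω), ← setIntegral_const,
    ← integral_const_mul, ← integral_add hE hconst]
  refine setIntegral_mono_on (integrableOn_of_continuousOn_closure hΩb
    (continuousOn_stabilityWeight hu hv p θ)) (hE.add hconst) hΩo.measurableSet fun x hx => ?_
  have hU : 1 ≤ u x + 1 := by linarith [hu.nonneg x hx]
  have hV : 1 ≤ v x + 1 := by linarith [hv.nonneg x hx]
  exact le_mul_mul_add_of_le_mul_sq (stabilityWeight_nonneg hu hv hx) (by positivity)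
    (by positivity) hη (rpow_mul_rpow_le_sq hU hV hs hr hω)

end Energy

theorem le_div_of_absorb {κ ρ K B c η E D : ℝ} (hκ : 0 < κ) (hρ : ρ < κ) (hK : 0 ≤ K)
    (hE : 0 ≤ E) (hc : c = (κ + ρ) / (2 * κ)) (hη : η = (κ - ρ) / (4 * (κ * K + 1)))
    (henergy : κ * (c * E - K * D) ≤ ρ * E) (hD : D ≤ η * E + B) :
    E ≤ 4 * κ * K * B / (κ - ρ) := by
  have hκK : 0 ≤ κ * K := by positivity
  have hκc : κ * c = (κ + ρ) / 2 := by rw [hc]; field_simp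
  have hκη : κ * K * η ≤ (κ - ρ) / 4 := by
    rw [hη, mul_div_assoc', div_le_div_iff₀ (by positivity) (by norm_num)]
    nlinarith
  rw [le_div_iff₀ (by linarith)]
  have hcE : κ * c * E = (κ + ρ) / 2 * E := by rw [hκc]
  linarith [mul_le_mul_of_nonneg_right hκη hE, mul_le_mul_of_nonneg_left hD hκK]

theorem exists_setIntegral_energyDensity_le {N : ℕ} {Ω : Set (EuclideanSpace ℝ (Fin N))}
    (hΩo : IsOpen Ω) (hΩb : Bornology.IsBounded Ω) {p θ σ s : ℝ} (hp : 0 < p) (hpθ : p ≤ θ)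
    (hσ : 0 < σ) (hs₂ : 2 < s) (hps : p + 1 ≤ 2 * s) (hL : Lpoly p θ s < 0) :
    ∃ ω > 0, ∃ M, ∀ lam > 0, ∀ u v : EuclideanSpace ℝ (Fin N) → ℝ,
      IsDirichletSolution Ω lam (σ * lam) p θ u v → IsStable Ω lam (σ * lam) p θ u v →
        ∫ x in Ω, energyDensity p θ s ((θ + 1) / (p + 1) * s) ω u v x ≤ M := by
  set r := (θ + 1) / (p + 1) * s with hr_def
  have hr : s ≤ r := le_mul_of_one_le_left (by linarith) (by rw [le_div_iff₀] <;> linarith)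
  have hrθ : θ + 1 ≤ 2 * r := by
    rw [hr_def, div_mul_eq_mul_div, mul_div_assoc', le_div_iff₀ (by linarith)]
    nlinarith
  have hC : 0 < testConst s := testConst_pos (by linarith)
  have hC' : 0 < testConst r := testConst_pos (by linarith)
  have hsτ : s * ((p + 1) / (2 * s)) = (p + 1) / 2 := by field_simp
  have hrτ : r * ((p + 1) / (2 * s)) = (θ + 1) / 2 := by rw [hr_def]; field_simp
  obtain ⟨ω, hω, hsource⟩ := exists_weight_source_le (mul_pos hσ hC) hC'
    (div_pos (by linarith) (by linarith)) (div_le_one_of_le₀ hps (by linarith)) hsτ hrτ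
  set κ := √(σ * p * θ)
  set ρ := √(σ * testConst s * testConst r)
  have hρκ : ρ < κ := by
    refine sqrt_lt_sqrt (by positivity) ?_
    rw [mul_assoc, mul_assoc]
    exact mul_lt_mul_of_pos_left
      (testConst_mul_testConst_lt hp hpθ (by linarith) hL) hσ
  have hρ : 0 ≤ ρ := sqrt_nonneg _
  have hκ : 0 < κ := hρ.trans_lt hρκ
  have hc : (κ + ρ) / (2 * κ) < 1 := by rw [div_lt_one (by positivity)]; linarith
  obtain ⟨K, hK₀, hK⟩ := exists_mul_add_one_rpow_le_posPart (q := s)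
    (show 0 ≤ (κ + ρ) / (2 * κ) by positivity) hc (by linarith)
  obtain ⟨K', hK₀', hK'⟩ := exists_mul_add_one_rpow_le_posPart (q := r)
    (show 0 ≤ (κ + ρ) / (2 * κ) by positivity) hc (by linarith)
  have hη : 0 < (κ - ρ) / (4 * (κ * (K + ω * K') + 1)) :=
    div_pos (by linarith) (by positivity)
  exact ⟨ω, hω, _, fun lam hlam u v h hstable => le_div_of_absorb hκ hρκ (by positivity)
    (setIntegral_nonneg hΩo.measurableSet fun x hx => energyDensity_nonneg h.fst h.snd hω.le hx)
    rfl rfl (h.mul_setIntegral_energyDensity_le hstable hΩo hΩb hlam hσ.le hs₂ (hs₂.trans_le hr)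
      hω.le hK hK' hsource) (setIntegral_stabilityWeight_le h.fst h.snd hΩo hΩb (by linarith)
        (by linarith) hω hη)⟩

theorem rpow_mul_rpow_le_weight_mul {U V p s ω : ℝ} (θ r : ℝ) (hU : 0 < U) (hV : 0 < V)
    (hω : 0 ≤ ω) :
    U ^ ((θ - 1) / 2) * V ^ ((p + 2 * s - 1) / 2) ≤
      V ^ ((p - 1) / 2) * U ^ ((θ - 1) / 2) * (V ^ s + ω * U ^ r) := by
  rw [show (p + 2 * s - 1) / 2 = (p - 1) / 2 + s by ring, rpow_add hV, ← mul_assoc,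
    mul_comm (U ^ _)]
  gcongr
  exact le_add_of_nonneg_right (by positivity)

theorem mul_rpow_le_weight_mul {U V p θ s ω T : ℝ} (hU : 0 < U) (hV : 0 < V) (hp : 1 ≤ p)
    (hω : 0 ≤ ω) (hT : 0 ≤ T) (hUV : U ^ ((θ + 1) / (p + 1)) ≤ T * V) :
    ω * U ^ (θ + (θ + 1) * (s - 1) / (p + 1)) ≤ T ^ ((p - 1) / 2) *
      (V ^ ((p - 1) / 2) * U ^ ((θ - 1) / 2) * (V ^ s + ω * U ^ ((θ + 1) / (p + 1) * s))) := by
  have hexp : θ + (θ + 1) * (s - 1) / (p + 1) =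
      (θ + 1) / (p + 1) * ((p - 1) / 2) + (θ - 1) / 2 + (θ + 1) / (p + 1) * s := by
    field_simp
    ring
  have hpow : U ^ ((θ + 1) / (p + 1) * ((p - 1) / 2)) ≤ T ^ ((p - 1) / 2) * V ^ ((p - 1) / 2) := by
    rw [rpow_mul hU.le, ← mul_rpow hT hV.le]
    exact rpow_le_rpow (by positivity) hUV (by linarith)
  calc ω * U ^ (θ + (θ + 1) * (s - 1) / (p + 1))
      = U ^ ((θ + 1) / (p + 1) * ((p - 1) / 2)) *
          (U ^ ((θ - 1) / 2) * (ω * U ^ ((θ + 1) / (p + 1) * s))) := by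
        rw [hexp, rpow_add hU, rpow_add hU]
        ring
    _ ≤ T ^ ((p - 1) / 2) * V ^ ((p - 1) / 2) *
          (U ^ ((θ - 1) / 2) * (V ^ s + ω * U ^ ((θ + 1) / (p + 1) * s))) := by
        gcongr
        exact le_add_of_nonneg_left (by positivity)
    _ = _ := by ring

theorem setIntegral_add_setIntegral_le {N : ℕ} {Ω : Set (EuclideanSpace ℝ (Fin N))}
    {u v : EuclideanSpace ℝ (Fin N) → ℝ} (hu : IsDirichletFun Ω u) (hv : IsDirichletFun Ω v)
    (hΩo : IsOpen Ω) (hΩb : Bornology.IsBounded Ω) {p θ s ω T : ℝ} (hp : 1 ≤ p) (hω : 0 < ω)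
    (hT : 0 ≤ T) (huv : ∀ x ∈ Ω, (u x + 1) ^ ((θ + 1) / (p + 1)) ≤ T * (v x + 1)) :
    (∫ x in Ω, (u x + 1) ^ ((θ - 1) / 2) * (v x + 1) ^ ((p + 2 * s - 1) / 2)) +
        (∫ x in Ω, (u x + 1) ^ (θ + (θ + 1) * (s - 1) / (p + 1))) ≤
      (1 + T ^ ((p - 1) / 2) / ω) *
        ∫ x in Ω, energyDensity p θ s ((θ + 1) / (p + 1) * s) ω u v x := by
  have hE := integrableOn_energyDensity hu hv hΩb p θ s ((θ + 1) / (p + 1) * s) ω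
  have hfst : ∫ x in Ω, (u x + 1) ^ ((θ - 1) / 2) * (v x + 1) ^ ((p + 2 * s - 1) / 2) ≤
      ∫ x in Ω, energyDensity p θ s ((θ + 1) / (p + 1) * s) ω u v x :=
    setIntegral_mono_on (integrableOn_of_continuousOn_closure hΩb
      ((hu.continuousOn_add_one_rpow _).mul (hv.continuousOn_add_one_rpow _))) hE
      hΩo.measurableSet fun x hx => rpow_mul_rpow_le_weight_mul _ _
        (hu.add_one_pos (subset_closure hx)) (hv.add_one_pos (subset_closure hx)) hω.le
  have hsnd : ∫ x in Ω, (u x + 1) ^ (θ + (θ + 1) * (s - 1) / (p + 1)) ≤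
      T ^ ((p - 1) / 2) / ω *
        ∫ x in Ω, energyDensity p θ s ((θ + 1) / (p + 1) * s) ω u v x := by
    rw [← integral_const_mul]
    refine setIntegral_mono_on (integrableOn_of_continuousOn_closure hΩb
      (hu.continuousOn_add_one_rpow _)) (hE.const_mul _) hΩo.measurableSet fun x hx => ?_
    rw [div_mul_eq_mul_div, le_div_iff₀' hω]
    exact mul_rpow_le_weight_mul (hu.add_one_pos (subset_closure hx))
      (hv.add_one_pos (subset_closure hx)) hp hω.le hT (huv x hx)
  linarith

theorem stmt1_general {N : ℕ} {Ω : Set (EuclideanSpace ℝ (Fin N))} (hΩo : IsOpen Ω)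
    (hΩb : Bornology.IsBounded Ω) {p θ σ s : ℝ} (hp : 1 ≤ p) (hpθ : p ≤ θ) (hσ : 0 < σ)
    (hs₂ : 2 < s) (hps : p + 1 ≤ 2 * s) (hL : Lpoly p θ s < 0) :
    ∃ C : ℝ, ∀ lam > 0, ∀ u v : EuclideanSpace ℝ (Fin N) → ℝ,
      IsDirichletSolution Ω lam (σ * lam) p θ u v → IsStable Ω lam (σ * lam) p θ u v →
        (∫ x in Ω, (u x + 1) ^ ((θ - 1) / 2) * (v x + 1) ^ ((p + 2 * s - 1) / 2)) +
          (∫ x in Ω, (u x + 1) ^ (θ + (θ + 1) * (s - 1) / (p + 1))) ≤ C := by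
  obtain ⟨ω, hω, M, hM⟩ := exists_setIntegral_energyDensity_le hΩo hΩb (one_pos.trans_le hp) hpθ
    hσ hs₂ hps hL
  obtain ⟨T, hT, hcomparison⟩ := exists_rpow_le_mul_of_isDirichletSolution hΩo hΩb
    (one_pos.trans_le hp) hpθ hσ
  refine ⟨(1 + T ^ ((p - 1) / 2) / ω) * M, fun lam hlam u v h hstable => ?_⟩
  calc _ ≤ (1 + T ^ ((p - 1) / 2) / ω) *
        ∫ x in Ω, energyDensity p θ s ((θ + 1) / (p + 1) * s) ω u v x :=
      setIntegral_add_setIntegral_le h.fst h.snd hΩo hΩb hp hω hT.le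
        (hcomparison lam hlam u v h)
    _ ≤ (1 + T ^ ((p - 1) / 2) / ω) * M :=
      mul_le_mul_of_nonneg_left (hM lam hlam u v h hstable) (by positivity)

/-- uniform integral estimates along the ray for `s > p+1` with `L(s) < 0`. -/
theorem stmt1 {N : ℕ} (hN : 1 ≤ N) (Ω : Set (EuclideanSpace ℝ (Fin N)))
    (hΩo : IsOpen Ω) (hΩb : Bornology.IsBounded Ω) (hΩs : HasSmoothBoundary Ω)
    (p θ Λ σ s : ℝ) (hp : 1 < p) (hpθ : p ≤ θ) (hΛ : 0 < Λ) (hσ : 0 < σ)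
    (hs : p + 1 < s) (hL : Lpoly p θ s < 0) :
    ∃ C : ℝ, ∀ lam ∈ Set.Ioo (Λ / 2) Λ, ∀ u v : EuclideanSpace ℝ (Fin N) → ℝ,
      ContDiffOn ℝ 2 u Ω → ContDiffOn ℝ 2 v Ω →
      ContinuousOn u (closure Ω) → ContinuousOn v (closure Ω) →
      (∀ x ∈ Ω, 0 < u x) → (∀ x ∈ Ω, 0 < v x) →
      (∀ x ∈ frontier Ω, u x = 0) → (∀ x ∈ frontier Ω, v x = 0) →
      (∀ x ∈ Ω, -lap u x = lam * (v x + 1) ^ p) →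
      (∀ x ∈ Ω, -lap v x = σ * lam * (u x + 1) ^ θ) →
      IsStable Ω lam (σ * lam) p θ u v →
      (∫ x in Ω, (u x + 1) ^ ((θ - 1) / 2) * (v x + 1) ^ ((p + 2 * s - 1) / 2)) +
          (∫ x in Ω, (u x + 1) ^ (θ + (θ + 1) * (s - 1) / (p + 1))) ≤ C := by
  obtain ⟨C, hC⟩ := stmt1_general hΩo hΩb hp.le hpθ hσ (by linarith) (by linarith) hL
  exact ⟨C, fun lam hlam u v hu hv huc hvc hu₀ hv₀ hub hvb heq_u heq_v =>
    hC lam (by linarith [hlam.1]) u v ⟨⟨hu, huc, fun x hx => (hu₀ x hx).le, hub⟩,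
      ⟨hv, hvc, fun x hx => (hv₀ x hx).le, hvb⟩, heq_u, heq_v⟩⟩
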